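/- arXiv:1102.4177 — 2 statements merged into one kernel-verified Lean document; each statement's English description precedes it below -/
import Mathlib

section
/- On the quotient Cac(G) of a pointed connected finite graph, the graph distance of the graph G° (whose edges are pairs at cactus distance 1) coincides with the cactus distance d_Cac. -/
/-
Say that a vertex at distance `k` from `ρ` has level `k`. Following a geodesic to `ρ`, it has an
ancestor of each level `m ≤ k` to which it is joined by a path staying at levels at least `m`, and
moving to that ancestor costs `k - m` in cactus distance. Let `m` be the best level through which
`v` and `v'` can be joined, and suppose `d_Cac(v, v') > 0`. If `v` lies above level `m`, its
ancestor one level lower is one unit closer to `v'`; otherwise `v` has level `m` and is one unit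
away from the ancestor of `v'` of level `m + 1`, which is again one unit closer to `v'`. Iterating
such unit steps gives a chain in `G°` of length `d_Cac(v, v')`, and by the triangle inequality no
chain is shorter.
-/

open SimpleGraph

/-- The maximum over all paths from `v` to `v'` of the minimum over vertices `a` on the
path of the graph distance `d_gr(ρ, a)`. -/
noncomputable def cacMaxMin {V : Type*} (G : SimpleGraph V) (ρ v v' : V) : ℕ :=
  sSup {m : ℕ | ∃ w : G.Walk v v', ∀ a ∈ w.support, m ≤ G.dist ρ a}

/-- The cactus pseudo-distance of the pointed graph `(G, ρ)`. -/
noncomputable def dCac {V : Type*} (G : SimpleGraph V) (ρ v v' : V) : ℕ :=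
  G.dist ρ v + G.dist ρ v' - 2 * cacMaxMin G ρ v v'

section UnitChain

variable {α : Type*} {d : α → α → ℕ}

theorem exists_unit_chain
    (step : ∀ a b, 0 < d a b → ∃ c, d a c = 1 ∧ d c b + 1 = d a b) {n : ℕ} {a b : α}
    (hn : d a b = n) :
    ∃ x : ℕ → α, x 0 = a ∧ d (x n) b = 0 ∧ ∀ i < n, d (x i) (x (i + 1)) = 1 := by
  induction n generalizing a with
  | zero => exact ⟨fun _ => a, rfl, hn, by simp⟩
  | succ n ih =>
    obtain ⟨c, hac, hcb⟩ := step a b (by lia)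
    obtain ⟨x, rfl, hxn, hx⟩ := ih (a := c) (by lia)
    refine ⟨fun i => Nat.casesOn i a x, rfl, hxn, ?_⟩
    rintro (_ | i) hi
    · exact hac
    · exact hx i (by lia)

theorem le_of_unit_chain (self : ∀ a, d a a = 0)
    (triangle : ∀ a b c, d a c ≤ d a b + d b c) {x : ℕ → α} {n : ℕ}
    (hx : ∀ i < n, d (x i) (x (i + 1)) = 1) : d (x 0) (x n) ≤ n := by
  induction n with
  | zero => exact (self _).le
  | succ n ih =>
    calc d (x 0) (x (n + 1))
      _ ≤ d (x 0) (x n) + d (x n) (x (n + 1)) := triangle _ _ _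
      _ ≤ n + 1 := add_le_add (ih fun i hi => hx i (by lia)) (hx n n.lt_succ_self).le

theorem eq_sInf_unit_chain_length (self : ∀ a, d a a = 0) (comm : ∀ a b, d a b = d b a)
    (triangle : ∀ a b c, d a c ≤ d a b + d b c)
    (step : ∀ a b, 0 < d a b → ∃ c, d a c = 1 ∧ d c b + 1 = d a b) (a b : α) :
    d a b = sInf {n : ℕ | ∃ x : ℕ → α, d (x 0) a = 0 ∧ d (x n) b = 0 ∧
      ∀ i < n, d (x i) (x (i + 1)) = 1} := by
  refine (IsLeast.csInf_eq ⟨?_, ?_⟩).symm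
  · obtain ⟨x, rfl, hxb, hx⟩ := exists_unit_chain step (rfl : d a b = d a b)
    exact ⟨x, self _, hxb, hx⟩
  · rintro n ⟨x, hxa, hxb, hx⟩
    calc d a b
      _ ≤ d a (x 0) + d (x 0) b := triangle _ _ _
      _ ≤ d a (x 0) + (d (x 0) (x n) + d (x n) b) := by gcongr; exact triangle _ _ _
      _ = d (x 0) (x n) := by rw [comm a, hxa, hxb, zero_add, add_zero]
      _ ≤ n := le_of_unit_chain self triangle hx

end UnitChain

section Cactus

variable {V : Type*} {G : SimpleGraph V}

theorem dist_getVert_of_length_eq_dist {u v : V} {w : G.Walk u v} (hw : w.length = G.dist u v)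
    {k : ℕ} (hk : k ≤ w.length) : G.dist u (w.getVert k) = k := by
  rw [← length_eq_dist_of_subwalk hw (w.isSubwalk_take k), Walk.take_length, min_eq_left hk]

theorem bddAbove_walk_dist_lowerBounds (G : SimpleGraph V) (ρ u v : V) :
    BddAbove {m : ℕ | ∃ w : G.Walk u v, ∀ a ∈ w.support, m ≤ G.dist ρ a} :=
  ⟨G.dist ρ u, fun _ ⟨w, hw⟩ => hw u w.start_mem_support⟩

theorem le_cacMaxMin {ρ u v : V} {m : ℕ} (w : G.Walk u v)
    (hw : ∀ a ∈ w.support, m ≤ G.dist ρ a) : m ≤ cacMaxMin G ρ u v :=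
  le_csSup (bddAbove_walk_dist_lowerBounds G ρ u v) ⟨w, hw⟩

theorem exists_walk_cacMaxMin_le_dist (ρ : V) {u v : V} (huv : G.Reachable u v) :
    ∃ w : G.Walk u v, ∀ a ∈ w.support, cacMaxMin G ρ u v ≤ G.dist ρ a := by
  have nonempty : {m : ℕ | ∃ w : G.Walk u v, ∀ a ∈ w.support, m ≤ G.dist ρ a}.Nonempty :=
    ⟨0, huv.some, fun _ _ => Nat.zero_le _⟩
  exact Nat.sSup_mem nonempty (bddAbove_walk_dist_lowerBounds G ρ u v)

theorem cacMaxMin_le_dist_left (G : SimpleGraph V) (ρ u v : V) :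
    cacMaxMin G ρ u v ≤ G.dist ρ u :=
  csSup_le' fun _ ⟨w, hw⟩ => hw u w.start_mem_support

theorem cacMaxMin_le_dist_right (G : SimpleGraph V) (ρ u v : V) :
    cacMaxMin G ρ u v ≤ G.dist ρ v :=
  csSup_le' fun _ ⟨w, hw⟩ => hw v w.end_mem_support

theorem cacMaxMin_comm (G : SimpleGraph V) (ρ u v : V) :
    cacMaxMin G ρ u v = cacMaxMin G ρ v u := by
  have le_swap (a b : V) : cacMaxMin G ρ a b ≤ cacMaxMin G ρ b a :=
    csSup_le' fun _ ⟨w, hw⟩ => le_cacMaxMin w.reverse (by simpa using hw)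
  exact (le_swap u v).antisymm (le_swap v u)

theorem cacMaxMin_self (G : SimpleGraph V) (ρ v : V) : cacMaxMin G ρ v v = G.dist ρ v :=
  (cacMaxMin_le_dist_left G ρ v v).antisymm (le_cacMaxMin Walk.nil (by simp))

theorem min_cacMaxMin_le (ρ : V) {a b c : V} (hab : G.Reachable a b) (hbc : G.Reachable b c) :
    min (cacMaxMin G ρ a b) (cacMaxMin G ρ b c) ≤ cacMaxMin G ρ a c := by
  obtain ⟨p, hp⟩ := exists_walk_cacMaxMin_le_dist ρ hab
  obtain ⟨q, hq⟩ := exists_walk_cacMaxMin_le_dist ρ hbc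
  refine le_cacMaxMin (p.append q) fun x hx => ?_
  rcases (p.mem_support_append_iff q).1 hx with hxp | hxq
  · exact min_le_of_left_le (hp x hxp)
  · exact min_le_of_right_le (hq x hxq)

theorem exists_dist_eq_and_cacMaxMin_eq {ρ v : V} (hv : G.Reachable ρ v) {m : ℕ}
    (hm : m ≤ G.dist ρ v) :
    ∃ u, G.dist ρ u = m ∧ cacMaxMin G ρ u v = m := by
  obtain ⟨w, hw⟩ := hv.exists_walk_length_eq_dist
  have hdist : G.dist ρ (w.getVert m) = m :=
    dist_getVert_of_length_eq_dist hw (hm.trans_eq hw.symm)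
  refine ⟨w.getVert m, hdist, ?_⟩
  refine ((cacMaxMin_le_dist_left ..).trans_eq hdist).antisymm (le_cacMaxMin (w.drop m) ?_)
  intro a ha
  obtain ⟨j, rfl, hj⟩ := Walk.mem_support_iff_exists_getVert.1 ha
  rw [Walk.drop_length] at hj
  rw [Walk.drop_getVert, dist_getVert_of_length_eq_dist hw (by lia)]
  exact Nat.le_add_right m j

-- In particular the natural-number subtraction in `dCac` never truncates.
theorem dCac_add_two_mul_cacMaxMin (G : SimpleGraph V) (ρ u v : V) :
    dCac G ρ u v + 2 * cacMaxMin G ρ u v = G.dist ρ u + G.dist ρ v := by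
  have hu := cacMaxMin_le_dist_left G ρ u v
  have hv := cacMaxMin_le_dist_right G ρ u v
  rw [dCac]
  lia

theorem dCac_self (G : SimpleGraph V) (ρ v : V) : dCac G ρ v v = 0 := by
  rw [dCac, cacMaxMin_self, two_mul, Nat.sub_self]

theorem dCac_comm (G : SimpleGraph V) (ρ u v : V) : dCac G ρ u v = dCac G ρ v u := by
  rw [dCac, dCac, cacMaxMin_comm, add_comm]

theorem dCac_triangle (ρ : V) {a b c : V} (hab : G.Reachable a b) (hbc : G.Reachable b c) :
    dCac G ρ a c ≤ dCac G ρ a b + dCac G ρ b c := by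
  have hmin := min_cacMaxMin_le ρ hab hbc
  have hab_le := cacMaxMin_le_dist_right G ρ a b
  have hbc_le := cacMaxMin_le_dist_left G ρ b c
  have eq_ab := dCac_add_two_mul_cacMaxMin G ρ a b
  have eq_bc := dCac_add_two_mul_cacMaxMin G ρ b c
  have eq_ac := dCac_add_two_mul_cacMaxMin G ρ a c
  lia

theorem exists_dCac_eq_one_and_add_one_eq (hG : G.Connected) {ρ v v' : V}
    (h : 0 < dCac G ρ v v') :
    ∃ u, dCac G ρ v u = 1 ∧ dCac G ρ u v' + 1 = dCac G ρ v v' := by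
  have eq_vv' := dCac_add_two_mul_cacMaxMin G ρ v v'
  suffices ∃ u, dCac G ρ v u ≤ 1 ∧ dCac G ρ u v' + 1 ≤ dCac G ρ v v' by
    obtain ⟨u, hvu, huv'⟩ := this
    have := dCac_triangle ρ (hG v u) (hG u v')
    exact ⟨u, by lia, by lia⟩
  rcases (cacMaxMin_le_dist_left G ρ v v').lt_or_eq with hlt | heq
  · obtain ⟨u, hu, huv⟩ := exists_dist_eq_and_cacMaxMin_eq (hG ρ v) (Nat.sub_le _ 1)
    have hle : cacMaxMin G ρ v v' ≤ cacMaxMin G ρ u v' := by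
      have := min_cacMaxMin_le ρ (hG u v) (hG v v')
      lia
    have eq_uv := dCac_add_two_mul_cacMaxMin G ρ u v
    have eq_uv' := dCac_add_two_mul_cacMaxMin G ρ u v'
    rw [dCac_comm G ρ u v] at eq_uv
    exact ⟨u, by lia, by lia⟩
  · obtain ⟨u, hu, huv'⟩ :=
      exists_dist_eq_and_cacMaxMin_eq (m := cacMaxMin G ρ v v' + 1) (hG ρ v') (by lia)
    have hle : cacMaxMin G ρ v v' ≤ cacMaxMin G ρ v u := by
      have := min_cacMaxMin_le ρ (hG v v') (hG v' u)
      rw [cacMaxMin_comm G ρ v' u] at this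
      lia
    have eq_vu := dCac_add_two_mul_cacMaxMin G ρ v u
    have eq_uv' := dCac_add_two_mul_cacMaxMin G ρ u v'
    exact ⟨u, by lia, by lia⟩

theorem stmt6_general (hG : G.Connected) (ρ v v' : V) :
    dCac G ρ v v' =
      sInf {n : ℕ | ∃ x : ℕ → V, dCac G ρ (x 0) v = 0 ∧ dCac G ρ (x n) v' = 0 ∧
        ∀ i < n, dCac G ρ (x i) (x (i + 1)) = 1} :=
  eq_sInf_unit_chain_length (dCac_self G ρ) (dCac_comm G ρ)
    (fun a b c => dCac_triangle ρ (hG a b) (hG b c))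
    (fun _ _ => exists_dCac_eq_one_and_add_one_eq hG) v v'

end Cactus

/-- On the quotient `Cac(G)`, the graph distance of `G°` (whose edges are pairs of classes
at cactus distance 1) coincides with the cactus distance: `d_Cac(v, v')` equals the minimal
number of steps of a chain of classes joining the class of `v` to the class of `v'`, each
consecutive pair at cactus distance 1. -/
theorem stmt6 {V : Type*} [Fintype V] (G : SimpleGraph V) (hG : G.Connected)
    (ρ v v' : V) :
    dCac G ρ v v' =
      sInf {n : ℕ | ∃ x : ℕ → V, dCac G ρ (x 0) v = 0 ∧ dCac G ρ (x n) v' = 0 ∧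
        ∀ i < n, dCac G ρ (x i) (x (i + 1)) = 1} :=
  stmt6_general hG ρ v v'
end

section
/- If pointed graphs G_n rescaled by positive factors r_n → 0 converge in the Gromov-Hausdorff sense to a pointed compact metric space E, then the rescaled cactuses r_n · Cac(G_n) converge in the Gromov-Hausdorff sense to Kac(E). -/
open SimpleGraph

/-- `E` is a geodesic space: any two points are joined by an isometric path. -/
def IsGeodesicSpace (E : Type*) [MetricSpace E] : Prop :=
  ∀ a b : E, ∃ γ : ℝ → E, γ 0 = a ∧ γ (dist a b) = b ∧
    ∀ s ∈ Set.Icc (0 : ℝ) (dist a b), ∀ t ∈ Set.Icc (0 : ℝ) (dist a b),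
      dist (γ s) (γ t) = |s - t|

/-- The continuous cactus pseudo-distance associated with the pointed space `(E, ρ)`:
`d_Kac(a, b) = d(ρ,a) + d(ρ,b) - 2 sup_γ inf_t d(ρ, γ(t))`, the supremum being over all
continuous curves `γ : [0,1] → E` from `a` to `b`. -/
noncomputable def dKac {E : Type*} [MetricSpace E] (ρ a b : E) : ℝ :=
  dist ρ a + dist ρ b -
    2 * sSup {m : ℝ | ∃ γ : ℝ → E, ContinuousOn γ (Set.Icc 0 1) ∧ γ 0 = a ∧ γ 1 = b ∧
      m = ⨅ t : Set.Icc (0 : ℝ) 1, dist ρ (γ t)}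


/-- A correspondence between the pointed sets `(X, ρ)` and `(Y, ρ')`. -/
def IsCorrespondence {X Y : Type*} (ρ : X) (ρ' : Y) (R : Set (X × Y)) : Prop :=
  (ρ, ρ') ∈ R ∧ (∀ x : X, ∃ y : Y, (x, y) ∈ R) ∧ (∀ y : Y, ∃ x : X, (x, y) ∈ R)

/-- The distortion of a correspondence `R` with respect to the (pseudo-)distances
`dX` and `dY`. -/
noncomputable def distortion {X Y : Type*} (dX : X → X → ℝ) (dY : Y → Y → ℝ)
    (R : Set (X × Y)) : ℝ :=
  sSup {r : ℝ | ∃ p ∈ R, ∃ q ∈ R, r = |dX p.1 q.1 - dY p.2 q.2|}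

/-- The pointed Gromov–Hausdorff distance between the quotient metric spaces of the
pseudo-distances `dX`, `dY`, expressed as half the infimum of distortions of
correspondences containing the pair of base points. -/
noncomputable def ghDistCorr {X Y : Type*} (dX : X → X → ℝ) (dY : Y → Y → ℝ)
    (ρ : X) (ρ' : Y) : ℝ :=
  sInf {D : ℝ | ∃ R : Set (X × Y), IsCorrespondence ρ ρ' R ∧ D = distortion dX dY R} / 2

/-!
Both cactus pseudo-distances have the form `d(ρ, a) + d(ρ, b) - 2 h(a, b)`, where `h(a, b)` is the
supremum of the levels `m` such that `a` and `b` are joined inside the superlevel set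
`{d(ρ, ·) ≥ m}`. It therefore suffices that a correspondence of distortion at most `ε` between a
graph of mesh `r` and `E` carries joining paths to joining paths, up to a loss of `O(ε + r)` in the
level. A curve in `E` is followed in the graph by joining the vertices matched to nearby points of
the curve by shortest walks. A walk in the graph is followed in `E` by joining the points matched to
consecutive vertices by geodesics; these exist because the graph geodesics converge, along a
subnet, to geodesics of the compact space `E`.
-/

open Filter Topology

section ApproxCorrespondence

variable {X Y : Type*} {dX : X → X → ℝ} {dY : Y → Y → ℝ} {ρ : X} {ρ' : Y} {ε δ : ℝ}
  {R : Set (X × Y)}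

/-- An `ε`-correspondence: a correspondence of pointed sets whose distortion is at most `ε`. The
bound is imposed on each pair because `distortion` has the junk value `0` on unbounded families. -/
structure IsApproxCorrespondence (dX : X → X → ℝ) (dY : Y → Y → ℝ) (ρ : X) (ρ' : Y) (ε : ℝ)
    (R : Set (X × Y)) : Prop where
  isCorrespondence : IsCorrespondence ρ ρ' R
  abs_sub_le : ∀ {x x' y y'}, (x, y) ∈ R → (x', y') ∈ R → |dX x x' - dY y y'| ≤ ε

namespace IsApproxCorrespondence

theorem base_mem (h : IsApproxCorrespondence dX dY ρ ρ' ε R) : (ρ, ρ') ∈ R :=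
  h.isCorrespondence.1

theorem exists_right (h : IsApproxCorrespondence dX dY ρ ρ' ε R) (x : X) : ∃ y, (x, y) ∈ R :=
  h.isCorrespondence.2.1 x

theorem exists_left (h : IsApproxCorrespondence dX dY ρ ρ' ε R) (y : Y) : ∃ x, (x, y) ∈ R :=
  h.isCorrespondence.2.2 y

theorem left_le_add (h : IsApproxCorrespondence dX dY ρ ρ' ε R) {x x' : X} {y y' : Y}
    (hxy : (x, y) ∈ R) (hxy' : (x', y') ∈ R) : dX x x' ≤ dY y y' + ε := by
  linarith [(abs_le.1 (h.abs_sub_le hxy hxy')).2]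

theorem right_le_add (h : IsApproxCorrespondence dX dY ρ ρ' ε R) {x x' : X} {y y' : Y}
    (hxy : (x, y) ∈ R) (hxy' : (x', y') ∈ R) : dY y y' ≤ dX x x' + ε := by
  linarith [(abs_le.1 (h.abs_sub_le hxy hxy')).1]

theorem nonneg (h : IsApproxCorrespondence dX dY ρ ρ' ε R) : 0 ≤ ε :=
  (abs_nonneg _).trans (h.abs_sub_le h.base_mem h.base_mem)

theorem mono (h : IsApproxCorrespondence dX dY ρ ρ' ε R) (hεδ : ε ≤ δ) :
    IsApproxCorrespondence dX dY ρ ρ' δ R :=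
  ⟨h.isCorrespondence, fun hxy hxy' => (h.abs_sub_le hxy hxy').trans hεδ⟩

end IsApproxCorrespondence

theorem distortion_nonneg (dX : X → X → ℝ) (dY : Y → Y → ℝ) (R : Set (X × Y)) :
    0 ≤ distortion dX dY R := by
  refine Real.sSup_nonneg ?_
  rintro _ ⟨p, _, q, _, rfl⟩
  exact abs_nonneg _

theorem ghDistCorr_nonneg (dX : X → X → ℝ) (dY : Y → Y → ℝ) (ρ : X) (ρ' : Y) :
    0 ≤ ghDistCorr dX dY ρ ρ' := by
  refine div_nonneg (Real.sInf_nonneg ?_) zero_le_two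
  rintro _ ⟨R, _, rfl⟩
  exact distortion_nonneg dX dY R

theorem IsApproxCorrespondence.distortion_le (h : IsApproxCorrespondence dX dY ρ ρ' ε R) :
    distortion dX dY R ≤ ε := by
  refine Real.sSup_le ?_ h.nonneg
  rintro _ ⟨p, hp, q, hq, rfl⟩
  exact h.abs_sub_le hp hq

theorem IsApproxCorrespondence.ghDistCorr_le (h : IsApproxCorrespondence dX dY ρ ρ' ε R) :
    ghDistCorr dX dY ρ ρ' ≤ ε / 2 := by
  have hbdd : BddBelow {D | ∃ R, IsCorrespondence ρ ρ' R ∧ D = distortion dX dY R} := by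
    refine ⟨0, ?_⟩
    rintro _ ⟨R', _, rfl⟩
    exact distortion_nonneg dX dY R'
  exact div_le_div_of_nonneg_right
    ((csInf_le hbdd ⟨R, h.isCorrespondence, rfl⟩).trans h.distortion_le) zero_le_two

theorem exists_isApproxCorrespondence_of_ghDistCorr_lt
    (hbdd : ∃ B, ∀ x x' y y', |dX x x' - dY y y'| ≤ B) (hε : ghDistCorr dX dY ρ ρ' < ε / 2) :
    ∃ R, IsApproxCorrespondence dX dY ρ ρ' ε R := by
  have huniv : IsCorrespondence ρ ρ' Set.univ :=
    ⟨trivial, fun _ => ⟨ρ', trivial⟩, fun _ => ⟨ρ, trivial⟩⟩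
  have hne : {D | ∃ R, IsCorrespondence ρ ρ' R ∧ D = distortion dX dY R}.Nonempty :=
    ⟨_, Set.univ, huniv, rfl⟩
  obtain ⟨_, ⟨R, hR, rfl⟩, hlt⟩ :=
    exists_lt_of_csInf_lt hne ((div_lt_div_iff_of_pos_right two_pos).1 hε)
  obtain ⟨B, hB⟩ := hbdd
  have hB' : BddAbove {d | ∃ p ∈ R, ∃ q ∈ R, d = |dX p.1 q.1 - dY p.2 q.2|} := by
    refine ⟨B, ?_⟩
    rintro _ ⟨p, _, q, _, rfl⟩
    exact hB _ _ _ _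
  exact ⟨R, hR, fun hxy hxy' => (le_csSup hB' ⟨_, hxy, _, hxy', rfl⟩).trans hlt.le⟩

section Tendsto

variable {ι : Type*} {l : Filter ι} {X : ι → Type*} {Y : ι → Type*} {dX : ∀ i, X i → X i → ℝ}
  {dY : ∀ i, Y i → Y i → ℝ} {ρ : ∀ i, X i} {ρ' : ∀ i, Y i}

theorem tendsto_ghDistCorr_zero
    (h : ∀ δ > 0, ∀ᶠ i in l, ∃ R, IsApproxCorrespondence (dX i) (dY i) (ρ i) (ρ' i) δ R) :
    Tendsto (fun i => ghDistCorr (dX i) (dY i) (ρ i) (ρ' i)) l (𝓝 0) := by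
  refine tendsto_order.2 ⟨fun c hc => .of_forall fun i =>
    hc.trans_le (ghDistCorr_nonneg _ _ _ _), fun c hc => ?_⟩
  filter_upwards [h c hc] with i ⟨R, hR⟩
  exact hR.ghDistCorr_le.trans_lt (half_lt_self hc)

theorem eventually_exists_isApproxCorrespondence
    (hbdd : ∀ i, ∃ B, ∀ x x' y y', |dX i x x' - dY i y y'| ≤ B)
    (h : Tendsto (fun i => ghDistCorr (dX i) (dY i) (ρ i) (ρ' i)) l (𝓝 0)) {δ : ℝ} (hδ : 0 < δ) :
    ∀ᶠ i in l, ∃ R, IsApproxCorrespondence (dX i) (dY i) (ρ i) (ρ' i) δ R := by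
  filter_upwards [h.eventually_lt_const (half_pos hδ)] with i hi
  exact exists_isApproxCorrespondence_of_ghDistCorr_lt (hbdd i) hi

end Tendsto

end ApproxCorrespondence

section Walks

variable {V : Type*} {G : SimpleGraph V} {s t : Set V} {u v w : V}

/-- Two vertices are joined by a walk that stays in the set `s`: the discrete counterpart of
`JoinedIn`. -/
def WalkJoinedIn (G : SimpleGraph V) (s : Set V) (u v : V) : Prop :=
  ∃ p : G.Walk u v, ∀ x ∈ p.support, x ∈ s

namespace WalkJoinedIn

theorem symm (h : WalkJoinedIn G s u v) : WalkJoinedIn G s v u := by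
  obtain ⟨p, hp⟩ := h
  exact ⟨p.reverse, fun x hx => hp x (by simpa using hx)⟩

theorem trans (huv : WalkJoinedIn G s u v) (hvw : WalkJoinedIn G s v w) :
    WalkJoinedIn G s u w := by
  obtain ⟨p, hp⟩ := huv
  obtain ⟨q, hq⟩ := hvw
  exact ⟨p.append q, fun x hx => ((p.mem_support_append_iff q).1 hx).elim (hp x) (hq x)⟩

theorem mono (h : WalkJoinedIn G s u v) (hst : s ⊆ t) : WalkJoinedIn G t u v :=
  h.imp fun _ hp x hx => hst (hp x hx)

theorem left_mem (h : WalkJoinedIn G s u v) : u ∈ s :=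
  h.elim fun p hp => hp u p.start_mem_support

theorem right_mem (h : WalkJoinedIn G s u v) : v ∈ s :=
  h.elim fun p hp => hp v p.end_mem_support

end WalkJoinedIn

theorem walkJoinedIn_dist_le_dist (h : G.Reachable u v) :
    WalkJoinedIn G {x | G.dist u x ≤ G.dist u v} u v := by
  classical
  obtain ⟨p, hp⟩ := h.exists_walk_length_eq_dist
  refine ⟨p, fun x hx => ?_⟩
  calc G.dist u x ≤ (p.takeUntil x hx).length := dist_le _
    _ ≤ p.length := p.length_takeUntil_le_length hx
    _ = G.dist u v := hp

theorem dist_getVert_getVert_add_le (p : G.Walk u v) (i j : ℕ) :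
    G.dist (p.getVert i) (p.getVert (i + j)) ≤ j := by
  rw [← p.drop_getVert]
  refine (dist_le ((p.drop i).take j)).trans ?_
  rw [Walk.take_length]
  exact min_le_left _ _

end Walks

section GraphCactus

variable {V : Type*} {G : SimpleGraph V} {ρ v v' : V}

theorem le_cacMaxMin_s10 {k : ℕ} (h : WalkJoinedIn G {x | k ≤ G.dist ρ x} v v') :
    k ≤ cacMaxMin G ρ v v' :=
  le_csSup (s := {m | WalkJoinedIn G {x | m ≤ G.dist ρ x} v v'})
    ⟨G.dist ρ v, fun _ hm => hm.left_mem⟩ h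

theorem walkJoinedIn_cacMaxMin (h : G.Reachable v v') :
    WalkJoinedIn G {x | cacMaxMin G ρ v v' ≤ G.dist ρ x} v v' :=
  Nat.sSup_mem (s := {m | WalkJoinedIn G {x | m ≤ G.dist ρ x} v v'})
    (h.elim fun p => ⟨0, p, fun _ _ => Nat.zero_le _⟩)
    ⟨G.dist ρ v, fun _ hm => hm.left_mem⟩

theorem le_mul_cacMaxMin {r m : ℝ} (hr : 0 < r)
    (h : WalkJoinedIn G {x | m ≤ r * G.dist ρ x} v v') : m ≤ r * cacMaxMin G ρ v v' := by
  have hceil : ⌈m / r⌉₊ ≤ cacMaxMin G ρ v v' :=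
    le_cacMaxMin_s10 (h.mono fun x hx => Nat.ceil_le.2 ((div_le_iff₀' hr).2 hx))
  exact (div_le_iff₀' hr).1 (Nat.ceil_le.1 hceil)

theorem cast_dCac (h : G.Reachable v v') :
    (dCac G ρ v v' : ℝ) = G.dist ρ v + G.dist ρ v' - 2 * cacMaxMin G ρ v v' := by
  have hv : cacMaxMin G ρ v v' ≤ G.dist ρ v := (walkJoinedIn_cacMaxMin h).left_mem
  have hv' : cacMaxMin G ρ v v' ≤ G.dist ρ v' := (walkJoinedIn_cacMaxMin h).right_mem
  rw [dCac, Nat.cast_sub (by omega)]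
  push_cast
  rfl

end GraphCactus

section MetricCactus

variable {E : Type*} [MetricSpace E] {ρ a b : E} {m : ℝ}

/-- The supremum over curves `γ` from `a` to `b` of the minimal distance from `ρ` to `γ`: the
continuous counterpart of `cacMaxMin`. -/
noncomputable def kacMaxMin (ρ a b : E) : ℝ :=
  sSup {m : ℝ | ∃ γ : ℝ → E, ContinuousOn γ (Set.Icc 0 1) ∧ γ 0 = a ∧ γ 1 = b ∧
    m = ⨅ t : Set.Icc (0 : ℝ) 1, dist ρ (γ t)}

theorem dKac_eq (ρ a b : E) : dKac ρ a b = dist ρ a + dist ρ b - 2 * kacMaxMin ρ a b := rfl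

theorem joinedIn_iInf_dist_le {γ : ℝ → E} (hγ : ContinuousOn γ (Set.Icc 0 1)) :
    JoinedIn {x | ⨅ t : Set.Icc (0 : ℝ) 1, dist ρ (γ t) ≤ dist ρ x} (γ 0) (γ 1) := by
  refine JoinedIn.ofLine hγ rfl rfl ?_
  rintro _ ⟨t, ht, rfl⟩
  have hbdd : BddBelow (Set.range fun t : Set.Icc (0 : ℝ) 1 => dist ρ (γ t)) :=
    ⟨0, Set.forall_mem_range.2 fun _ => dist_nonneg⟩
  exact ciInf_le hbdd ⟨t, ht⟩

theorem le_kacMaxMin (h : JoinedIn {x | m ≤ dist ρ x} a b) : m ≤ kacMaxMin ρ a b := by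
  obtain ⟨γ, hγ⟩ := h
  have hm : m ≤ ⨅ t : Set.Icc (0 : ℝ) 1, dist ρ (γ.extend t) :=
    le_ciInf fun t => by rw [Path.extend_apply _ t.2]; exact hγ t
  refine hm.trans (le_csSup ⟨dist ρ a, ?_⟩
    ⟨γ.extend, γ.continuous_extend.continuousOn, γ.extend_zero, γ.extend_one, rfl⟩)
  rintro _ ⟨γ', hγ', rfl, rfl, rfl⟩
  exact (joinedIn_iInf_dist_le hγ').source_mem

theorem kacMaxMin_le {M : ℝ} (hab : Joined a b)
    (h : ∀ m, JoinedIn {x | m ≤ dist ρ x} a b → m ≤ M) : kacMaxMin ρ a b ≤ M := by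
  obtain ⟨γ⟩ := hab
  refine csSup_le ⟨_, γ.extend, γ.continuous_extend.continuousOn, γ.extend_zero, γ.extend_one,
    rfl⟩ ?_
  rintro _ ⟨γ', hγ', rfl, rfl, rfl⟩
  exact h _ (joinedIn_iInf_dist_le hγ')

end MetricCactus

section Geodesic

variable {E : Type*} [MetricSpace E] {a b : E} {δ : ℝ} {f : ℝ → E}

theorem IsGeodesicSpace.joinedIn_closedBall (hE : IsGeodesicSpace E) (a b : E) :
    JoinedIn (Metric.closedBall a (dist a b)) a b := by
  obtain ⟨γ, h0, h1, hγ⟩ := hE a b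
  have hmaps : Set.MapsTo (fun t : ℝ => t * dist a b) (Set.Icc 0 1) (Set.Icc 0 (dist a b)) :=
    fun t ht => ⟨mul_nonneg ht.1 dist_nonneg, mul_le_of_le_one_left dist_nonneg ht.2⟩
  have hcont : ContinuousOn γ (Set.Icc 0 (dist a b)) :=
    (LipschitzOnWith.of_dist_le_mul (K := 1) fun s hs t ht => by
      rw [hγ s hs t ht, NNReal.coe_one, one_mul, Real.dist_eq]).continuousOn
  refine JoinedIn.ofLine (f := fun t => γ (t * dist a b))
    (hcont.comp (by fun_prop) hmaps) (by simpa using h0) (by simpa using h1) ?_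
  rintro _ ⟨t, ht, rfl⟩
  have hdist := hγ _ (hmaps ht) 0 ⟨le_rfl, dist_nonneg⟩
  rw [h0, sub_zero, abs_of_nonneg (hmaps ht).1] at hdist
  exact hdist.trans_le (hmaps ht).2

/-- A `δ`-approximate geodesic from `a` to `b`, parametrised by `[0, dist a b]` and possibly
discontinuous. Only upper bounds on distances are imposed: for `δ = 0` the triangle inequality
supplies the lower ones. -/
structure IsApproxGeodesic (a b : E) (δ : ℝ) (f : ℝ → E) : Prop where
  source_le : dist (f 0) a ≤ δ
  target_le : dist (f (dist a b)) b ≤ δ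
  dist_le : ∀ s ∈ Set.Icc 0 (dist a b), ∀ t ∈ Set.Icc 0 (dist a b), dist (f s) (f t) ≤ |s - t| + δ

theorem IsApproxGeodesic.mono {δ' : ℝ} (hf : IsApproxGeodesic a b δ f) (h : δ ≤ δ') :
    IsApproxGeodesic a b δ' f :=
  ⟨hf.source_le.trans h, hf.target_le.trans h, fun s hs t ht =>
    (hf.dist_le s hs t ht).trans (by gcongr)⟩

theorem IsApproxGeodesic.dist_eq (hf : IsApproxGeodesic a b 0 f) :
    ∀ s ∈ Set.Icc 0 (dist a b), ∀ t ∈ Set.Icc 0 (dist a b), dist (f s) (f t) = |s - t| := by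
  have h0 : f 0 = a := dist_le_zero.1 hf.source_le
  have h1 : f (dist a b) = b := dist_le_zero.1 hf.target_le
  intro s hs t ht
  wlog hst : s ≤ t generalizing s t
  · rw [_root_.dist_comm, abs_sub_comm]
    exact this t ht s hs (le_of_not_ge hst)
  have hle := hf.dist_le s hs t ht
  have hleft := hf.dist_le 0 ⟨le_rfl, dist_nonneg⟩ s hs
  have hright := hf.dist_le t ht (dist a b) ⟨dist_nonneg, le_rfl⟩
  rw [h0, zero_sub, abs_neg, abs_of_nonneg hs.1] at hleft
  rw [h1, abs_of_nonpos (sub_nonpos.2 ht.2)] at hright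
  rw [abs_of_nonpos (sub_nonpos.2 hst)] at hle ⊢
  linarith [dist_triangle4 a (f s) (f t) b]

theorem isClosed_setOf_isApproxGeodesic (a b : E) (δ : ℝ) :
    IsClosed {f : ℝ → E | IsApproxGeodesic a b δ f} := by
  have heq : {f : ℝ → E | IsApproxGeodesic a b δ f} =
      {f : ℝ → E | dist (f 0) a ≤ δ} ∩ ({f : ℝ → E | dist (f (dist a b)) b ≤ δ} ∩
        ⋂ s ∈ Set.Icc 0 (dist a b), ⋂ t ∈ Set.Icc 0 (dist a b),
          {f : ℝ → E | dist (f s) (f t) ≤ |s - t| + δ}) := by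
    ext f
    simp only [Set.mem_ofPred_eq, Set.mem_inter_iff, Set.mem_iInter]
    exact ⟨fun h => ⟨h.1, h.2, h.3⟩, fun h => ⟨h.1, h.2.1, h.2.2⟩⟩
  rw [heq]
  refine (isClosed_le (by fun_prop) continuous_const).inter
    ((isClosed_le (by fun_prop) continuous_const).inter ?_)
  exact isClosed_biInter fun s _ => isClosed_biInter fun t _ =>
    isClosed_le (by fun_prop) continuous_const

/-- By Tychonoff, approximate geodesics have a pointwise cluster point as the error tends to `0`. -/
theorem isGeodesicSpace_of_forall_exists_isApproxGeodesic [CompactSpace E]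
    (h : ∀ a b : E, ∀ δ > 0, ∃ f, IsApproxGeodesic a b δ f) : IsGeodesicSpace E := by
  intro a b
  obtain ⟨u, hu_anti, hu_pos, hu_lim⟩ := exists_seq_strictAnti_tendsto (0 : ℝ)
  obtain ⟨f, hf⟩ := IsCompact.nonempty_iInter_of_sequence_nonempty_isCompact_isClosed
    (fun n => {f : ℝ → E | IsApproxGeodesic a b (u n) f})
    (fun n f hf => IsApproxGeodesic.mono hf (hu_anti n.lt_succ_self).le)
    (fun n => h a b (u n) (hu_pos n))
    (isClosed_setOf_isApproxGeodesic a b (u 0)).isCompact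
    (fun n => isClosed_setOf_isApproxGeodesic a b (u n))
  have hfu : ∀ n, IsApproxGeodesic a b (u n) f := Set.mem_iInter.1 hf
  have hf0 : IsApproxGeodesic a b 0 f :=
    ⟨ge_of_tendsto' hu_lim fun n => (hfu n).source_le,
      ge_of_tendsto' hu_lim fun n => (hfu n).target_le, fun s hs t ht =>
      ge_of_tendsto' (hu_lim.const_add _) fun n => (hfu n).dist_le s hs t ht⟩
  exact ⟨f, dist_le_zero.1 hf0.source_le, dist_le_zero.1 hf0.target_le, hf0.dist_eq⟩

end Geodesic

namespace IsApproxCorrespondence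

variable {E V : Type*} [MetricSpace E] {ρ : E} {G : SimpleGraph V} {ρG : V} {r ε m : ℝ}
  {R : Set (V × E)} {u v v' : V} {a b : E}

theorem dist_le_of_walk
    (hR : IsApproxCorrespondence (fun v v' => r * (G.dist v v' : ℝ)) dist ρG ρ ε R) (hr : 0 ≤ r)
    (p : G.Walk u v) {i j : ℕ} (hij : i ≤ j) (ha : (p.getVert i, a) ∈ R)
    (hb : (p.getVert j, b) ∈ R) : dist a b ≤ r * (j - i) + ε := by
  have hG : G.dist (p.getVert i) (p.getVert j) + i ≤ j := by
    have h := dist_getVert_getVert_add_le p i (j - i)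
    rw [Nat.add_sub_cancel' hij] at h
    omega
  calc dist a b ≤ r * G.dist (p.getVert i) (p.getVert j) + ε := hR.right_le_add ha hb
    _ ≤ r * (j - i) + ε := by
      gcongr
      exact le_sub_iff_add_le.2 (mod_cast hG)

theorem exists_isApproxGeodesic
    (hR : IsApproxCorrespondence (fun v v' => r * (G.dist v v' : ℝ)) dist ρG ρ ε R)
    (hG : G.Connected) (hr : 0 < r) (a b : E) : ∃ f, IsApproxGeodesic a b (2 * ε + r) f := by
  obtain ⟨va, ha⟩ := hR.exists_left a
  obtain ⟨vb, hb⟩ := hR.exists_left b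
  obtain ⟨p, hp⟩ := hG.exists_walk_length_eq_dist va vb
  choose pt hpt using hR.exists_right
  have hε := hR.nonneg
  have hfloor_le {t : ℝ} (ht : 0 ≤ t) : r * ⌊t / r⌋₊ ≤ t :=
    (le_div_iff₀' hr).1 (Nat.floor_le (by positivity))
  have hlt_floor (t : ℝ) : t < r * (⌊t / r⌋₊ + 1) :=
    (div_lt_iff₀' hr).1 (Nat.lt_floor_add_one (t / r))
  refine ⟨fun t => pt (p.getVert ⌊t / r⌋₊), ?_, ?_, fun s hs t ht => ?_⟩
  · have h := hR.dist_le_of_walk hr.le p le_rfl (hpt (p.getVert 0)) (by simpa using ha)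
    simp only [zero_div, Nat.floor_zero]
    linarith
  · set k := ⌊dist a b / r⌋₊
    have hlen : r * p.length ≤ dist a b + ε := by
      rw [hp]
      exact hR.left_le_add ha hb
    have hvb : (p.getVert (max k p.length), b) ∈ R := by
      rwa [p.getVert_of_length_le (le_max_right _ _)]
    have h := hR.dist_le_of_walk hr.le p (le_max_left _ _) (hpt (p.getVert k)) hvb
    have hmax : r * (max k p.length : ℕ) ≤ dist a b + ε := by
      rcases max_choice k p.length with hk | hk <;> rw [hk]
      · linarith [hfloor_le (dist_nonneg (x := a) (y := b))]
      · exact hlen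
    linarith [hlt_floor (dist a b)]
  · wlog hst : s ≤ t generalizing s t
    · rw [_root_.dist_comm, abs_sub_comm]
      exact this t ht s hs (le_of_not_ge hst)
    have hfloor : ⌊s / r⌋₊ ≤ ⌊t / r⌋₊ := by gcongr
    have h := hR.dist_le_of_walk hr.le p hfloor (hpt _) (hpt _)
    rw [abs_of_nonpos (sub_nonpos.2 hst)]
    linarith [hfloor_le ht.1, hlt_floor s]

theorem joinedIn_of_dist_le_one
    (hR : IsApproxCorrespondence (fun v v' => r * (G.dist v v' : ℝ)) dist ρG ρ ε R)
    (hE : IsGeodesicSpace E) (hr : 0 ≤ r) (ha : (u, a) ∈ R) (hb : (v, b) ∈ R)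
    (huv : G.dist u v ≤ 1) (hu : m ≤ r * G.dist ρG u) :
    JoinedIn {x | m - (2 * ε + r) ≤ dist ρ x} a b := by
  refine (hE.joinedIn_closedBall a b).mono fun x hx => ?_
  have hab : dist a b ≤ r * G.dist u v + ε := hR.right_le_add ha hb
  have hρa : r * G.dist ρG u ≤ dist ρ a + ε := hR.left_le_add hR.base_mem ha
  have hr1 : r * G.dist u v ≤ r := mul_le_of_le_one_right hr (mod_cast huv)
  have hxa : dist x a ≤ dist a b := hx
  change m - (2 * ε + r) ≤ dist ρ x
  linarith [dist_triangle ρ x a]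

theorem joinedIn_of_walkJoinedIn
    (hR : IsApproxCorrespondence (fun v v' => r * (G.dist v v' : ℝ)) dist ρG ρ ε R)
    (hE : IsGeodesicSpace E) (hr : 0 ≤ r) (ha : (v, a) ∈ R) (hb : (v', b) ∈ R)
    (h : WalkJoinedIn G {x | m ≤ r * G.dist ρG x} v v') :
    JoinedIn {x | m - (2 * ε + r) ≤ dist ρ x} a b := by
  obtain ⟨p, hp⟩ := h
  induction p generalizing a with
  | nil => exact hR.joinedIn_of_dist_le_one hE hr ha hb (by simp) (hp _ (by simp))
  | cons hadj p ih =>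
    obtain ⟨c, hc⟩ := hR.exists_right _
    exact (hR.joinedIn_of_dist_le_one hE hr ha hc (dist_eq_one_iff_adj.2 hadj).le
      (hp _ (by simp))).trans (ih hc hb fun x hx => hp x (by simp [hx]))

theorem walkJoinedIn_of_dist_le
    (hR : IsApproxCorrespondence (fun v v' => r * (G.dist v v' : ℝ)) dist ρG ρ ε R)
    (hG : G.Connected) (hr : 0 ≤ r) (ha : (v, a) ∈ R) (hb : (v', b) ∈ R)
    (hab : dist a b ≤ ε) (hm : m ≤ dist ρ a) :
    WalkJoinedIn G {x | m - 3 * ε ≤ r * G.dist ρG x} v v' := by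
  refine (walkJoinedIn_dist_le_dist (hG.preconnected v v')).mono fun x hx => ?_
  have hvv' : r * G.dist v v' ≤ dist a b + ε := hR.left_le_add ha hb
  have hρv : dist ρ a ≤ r * G.dist ρG v + ε := hR.right_le_add hR.base_mem ha
  have hvx : r * G.dist ρG v ≤ r * (G.dist ρG x + G.dist v v') := by
    have hx : G.dist x v ≤ G.dist v v' := SimpleGraph.dist_comm.trans_le hx
    gcongr
    exact_mod_cast hG.dist_triangle.trans (Nat.add_le_add_left hx _)
  change m - 3 * ε ≤ r * G.dist ρG x
  linarith

theorem walkJoinedIn_of_joinedIn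
    (hR : IsApproxCorrespondence (fun v v' => r * (G.dist v v' : ℝ)) dist ρG ρ ε R)
    (hG : G.Connected) (hr : 0 ≤ r) (hε : 0 < ε) (ha : (v, a) ∈ R) (hb : (v', b) ∈ R)
    (h : JoinedIn {x | m ≤ dist ρ x} a b) :
    WalkJoinedIn G {x | m - 3 * ε ≤ r * G.dist ρG x} v v' := by
  obtain ⟨γ, hγ⟩ := h
  let P (s t : unitInterval) : Prop := ∀ u u', (u, γ s) ∈ R → (u', γ t) ∈ R →
    WalkJoinedIn G {x | m - 3 * ε ≤ r * G.dist ρG x} u u'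
  have hlocal (s : unitInterval) : ∀ᶠ t in 𝓝[Set.univ] s, P s t := by
    have hnear : ∀ᶠ t in 𝓝[Set.univ] s, dist (γ t) (γ s) < ε :=
      γ.continuous.continuousWithinAt.eventually (Metric.ball_mem_nhds (γ s) hε)
    filter_upwards [hnear] with t ht u u' hu hu'
    exact hR.walkJoinedIn_of_dist_le hG hr hu hu' (_root_.dist_comm (γ t) _ ▸ ht.le) (hγ s)
  have htrans (s t z : unitInterval) (hst : P s t) (htz : P t z) : P s z := by
    intro u u' hu hu'
    obtain ⟨y, hy⟩ := hR.exists_left (γ t)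
    exact (hst u y hu hy).trans (htz y u' hy hu')
  have hsymm (s t : unitInterval) (hst : P s t) : P t s :=
    fun u u' hu hu' => (hst u' u hu' hu).symm
  have hends : P 0 1 := isPreconnected_univ.induction₂ P (fun s _ => hlocal s)
    (fun s t z _ _ _ => htrans s t z) (fun s t _ _ => hsymm s t) trivial trivial
  exact hends v v' (by rwa [γ.source]) (by rwa [γ.target])

theorem mul_cacMaxMin_le
    (hR : IsApproxCorrespondence (fun v v' => r * (G.dist v v' : ℝ)) dist ρG ρ ε R)
    (hG : G.Connected) (hE : IsGeodesicSpace E) (hr : 0 ≤ r) (ha : (v, a) ∈ R)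
    (hb : (v', b) ∈ R) : r * cacMaxMin G ρG v v' ≤ kacMaxMin ρ a b + (2 * ε + r) := by
  have hwalk : WalkJoinedIn G {x | r * cacMaxMin G ρG v v' ≤ r * G.dist ρG x} v v' :=
    (walkJoinedIn_cacMaxMin (hG.preconnected v v')).mono fun x hx =>
      mul_le_mul_of_nonneg_left (Nat.cast_le.2 hx) hr
  exact sub_le_iff_le_add.1 (le_kacMaxMin (hR.joinedIn_of_walkJoinedIn hE hr ha hb hwalk))

theorem kacMaxMin_le_mul
    (hR : IsApproxCorrespondence (fun v v' => r * (G.dist v v' : ℝ)) dist ρG ρ ε R)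
    (hG : G.Connected) (hr : 0 < r) (hε : 0 < ε) (ha : (v, a) ∈ R) (hb : (v', b) ∈ R)
    (hab : Joined a b) : kacMaxMin ρ a b ≤ r * cacMaxMin G ρG v v' + 3 * ε :=
  kacMaxMin_le hab fun _ hm => sub_le_iff_le_add.1
    (le_mul_cacMaxMin hr (hR.walkJoinedIn_of_joinedIn hG hr.le hε ha hb hm))

theorem dCac_dKac
    (hR : IsApproxCorrespondence (fun v v' => r * (G.dist v v' : ℝ)) dist ρG ρ ε R)
    (hG : G.Connected) (hE : IsGeodesicSpace E) (hr : 0 < r) (hε : 0 < ε) :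
    IsApproxCorrespondence (fun v v' => r * (dCac G ρG v v' : ℝ)) (dKac ρ) ρG ρ
      (8 * ε + 2 * r) R := by
  refine ⟨hR.isCorrespondence, fun {v v' a b} ha hb => ?_⟩
  have hlow := hR.mul_cacMaxMin_le hG hE hr.le ha hb
  have hup := hR.kacMaxMin_le_mul hG hr hε ha hb (hE.joinedIn_closedBall a b).joined
  have hv := abs_le.1 (hR.abs_sub_le hR.base_mem ha)
  have hv' := abs_le.1 (hR.abs_sub_le hR.base_mem hb)
  rw [cast_dCac (hG.preconnected v v'), dKac_eq, abs_le]
  constructor <;> linarith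

end IsApproxCorrespondence

theorem exists_abs_mul_dist_sub_dist_le {E V : Type*} [PseudoMetricSpace E] [BoundedSpace E]
    {G : SimpleGraph V} (hG : G.ediam ≠ ⊤) (r : ℝ) :
    ∃ B, ∀ (v v' : V) (a b : E), |r * (G.dist v v' : ℝ) - dist a b| ≤ B := by
  refine ⟨|r| * G.diam + Metric.diam (Set.univ : Set E), fun v v' a b => ?_⟩
  calc |r * (G.dist v v' : ℝ) - dist a b| ≤ |r * (G.dist v v' : ℝ)| + |dist a b| := abs_sub _ _
    _ = |r| * G.dist v v' + dist a b := by rw [abs_mul, Nat.abs_cast, abs_of_nonneg dist_nonneg]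
    _ ≤ |r| * G.diam + Metric.diam (Set.univ : Set E) := by
      gcongr
      · exact dist_le_diam hG
      · exact Metric.dist_le_diam_of_mem (.all _) trivial trivial

theorem isGeodesicSpace_of_eventually_exists_isApproxCorrespondence {E : Type*} [MetricSpace E]
    [CompactSpace E] {ρ : E} {ι : Type*} {l : Filter ι} [l.NeBot] {V : ι → Type*}
    {G : ∀ i, SimpleGraph (V i)} {ρG : ∀ i, V i} {r : ι → ℝ} (hconn : ∀ i, (G i).Connected)
    (hrpos : ∀ i, 0 < r i) (hr0 : Tendsto r l (𝓝 0))
    (h : ∀ δ > 0, ∀ᶠ i in l, ∃ R, IsApproxCorrespondence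
      (fun v v' => r i * ((G i).dist v v' : ℝ)) dist (ρG i) ρ δ R) :
    IsGeodesicSpace E := by
  refine isGeodesicSpace_of_forall_exists_isApproxGeodesic fun a b δ hδ => ?_
  obtain ⟨i, ⟨R, hR⟩, hri⟩ :=
    ((h (δ / 4) (by positivity)).and (hr0.eventually_lt_const (half_pos hδ))).exists
  obtain ⟨f, hf⟩ := hR.exists_isApproxGeodesic (hconn i) (hrpos i) a b
  exact ⟨f, hf.mono (by linarith)⟩

theorem stmt10_general {E : Type*} [MetricSpace E] [CompactSpace E] (ρ : E) {ι : Type*}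
    {l : Filter ι} [l.NeBot] {V : ι → Type*} (G : ∀ i, SimpleGraph (V i))
    (hdiam : ∀ i, (G i).ediam ≠ ⊤) (ρG : ∀ i, V i) (r : ι → ℝ) (hrpos : ∀ i, 0 < r i)
    (hr0 : Tendsto r l (𝓝 0))
    (hGH : Tendsto (fun i => ghDistCorr (fun v v' : V i => r i * ((G i).dist v v' : ℝ))
      (fun a b : E => dist a b) (ρG i) ρ) l (𝓝 0)) :
    Tendsto (fun i => ghDistCorr (fun v v' : V i => r i * (dCac (G i) (ρG i) v v' : ℝ))
      (dKac ρ) (ρG i) ρ) l (𝓝 0) := by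
  have hconn (i) : (G i).Connected :=
    have : Nonempty (V i) := ⟨ρG i⟩
    connected_of_ediam_ne_top (hdiam i)
  have happrox : ∀ δ > 0, ∀ᶠ i in l, ∃ R, IsApproxCorrespondence
      (fun v v' => r i * ((G i).dist v v' : ℝ)) dist (ρG i) ρ δ R := fun δ hδ =>
    eventually_exists_isApproxCorrespondence
      (fun i => exists_abs_mul_dist_sub_dist_le (hdiam i) (r i)) hGH hδ
  have hE : IsGeodesicSpace E :=
    isGeodesicSpace_of_eventually_exists_isApproxCorrespondence hconn hrpos hr0 happrox
  refine tendsto_ghDistCorr_zero fun δ hδ => ?_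
  filter_upwards [happrox (δ / 16) (by positivity),
    hr0.eventually_lt_const (show 0 < δ / 4 by positivity)] with i ⟨R, hR⟩ hri
  exact ⟨R, (hR.dCac_dKac (hconn i) hE (hrpos i) (by positivity)).mono (by linarith)⟩

/-- If the pointed graphs `G n`, rescaled by `r n → 0`, converge to the pointed compact
metric space `E` in the Gromov–Hausdorff sense, then the rescaled cactuses
`r n • Cac(G n)` converge to `Kac(E)` in the Gromov–Hausdorff sense (Gromov–Hausdorff
distances are expressed via correspondences, cactuses via their pseudo-distances). -/
theorem stmt10 {E : Type*} [MetricSpace E] [CompactSpace E] (ρ : E)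
    {V : ℕ → Type*} [∀ n, Fintype (V n)] (G : ∀ n, SimpleGraph (V n))
    (hconn : ∀ n, (G n).Connected) (ρG : ∀ n, V n)
    (r : ℕ → ℝ) (hrpos : ∀ n, 0 < r n)
    (hr0 : Filter.Tendsto r Filter.atTop (nhds 0))
    (hGH : Filter.Tendsto
      (fun n => ghDistCorr (fun v v' : V n => r n * ((G n).dist v v' : ℝ))
        (fun a b : E => dist a b) (ρG n) ρ) Filter.atTop (nhds 0)) :
    Filter.Tendsto
      (fun n => ghDistCorr (fun v v' : V n => r n * (dCac (G n) (ρG n) v v' : ℝ))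
        (dKac ρ) (ρG n) ρ) Filter.atTop (nhds 0) :=
  stmt10_general ρ G (fun n => have := (hconn n).nonempty; connected_iff_ediam_ne_top.1 (hconn n))
    ρG r hrpos hr0 hGH
end
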